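/- Let K be a field of characteristic not equal to 2, f(z) = z² + c ∈ K[z], x_0 ∈ K, and n ≥ 1 an integer. Define D_1 := x_0 − c and D_i := f^i(0) − x_0 for i ≥ 2, and let K_n be the splitting field of f^n(X) − x_0 over K inside a fixed algebraic closure. Then [K_n : K] = 2^{2^n − 1} (i.e., the Galois group Gal(K_n/K) is isomorphic to the full automorphism group of the binary rooted tree of height n, which has order 2^{2^n − 1}) if and only if for every 1 ≤ i ≤ n, D_i is not a square in the field K(√D_1, …, √D_{i−1}) obtained from K by adjoining square roots of D_1, …, D_{i−1} (for i = 1 this means D_1 is not a square in K). -/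

import Mathlib

open Polynomial

open scoped Classical

namespace ArbQ
variable {K Ω : Type*} [Field K] [Field Ω] [Algebra K Ω]
open IntermediateField

lemma sup_eq (E : IntermediateField K Ω) (b : Ω) :
    E ⊔ adjoin K {b} = (adjoin E {b}).restrictScalars K := by
  rw [restrictScalars_adjoin, adjoin_union, adjoin_self]

lemma integral_of_sq (E : IntermediateField K Ω) {b : Ω} (hb : b ^ 2 ∈ E) : IsIntegral E b := by
  refine ⟨X ^ 2 - C ⟨b ^ 2, hb⟩, monic_X_pow_sub_C _ two_ne_zero, ?_⟩
  simp

lemma exists_rep (E : IntermediateField K Ω) {b : Ω} (hb : b ^ 2 ∈ E) {x : Ω}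
    (hx : x ∈ E ⊔ adjoin K {b}) : ∃ u ∈ E, ∃ v ∈ E, x = u + v * b := by
  rw [sup_eq, mem_restrictScalars, ← mem_toSubalgebra,
    adjoin_simple_toSubalgebra_of_isAlgebraic (integral_of_sq E hb).isAlgebraic] at hx
  induction hx using Algebra.adjoin_induction with
  | mem x hx =>
    rw [Set.mem_singleton_iff] at hx
    exact ⟨0, zero_mem _, 1, one_mem _, by simp [hx]⟩
  | algebraMap r => exact ⟨r, r.2, 0, zero_mem _, by simp⟩
  | add x y _ _ h1 h2 =>
    obtain ⟨u, hu, v, hv, rfl⟩ := h1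
    obtain ⟨u', hu', v', hv', rfl⟩ := h2
    exact ⟨u + u', add_mem hu hu', v + v', add_mem hv hv', by ring⟩
  | mul x y _ _ h1 h2 =>
    obtain ⟨u, hu, v, hv, rfl⟩ := h1
    obtain ⟨u', hu', v', hv', rfl⟩ := h2
    exact ⟨u * u' + v * v' * b ^ 2, add_mem (mul_mem hu hu') (mul_mem (mul_mem hv hv') hb),
      u * v' + v * u', add_mem (mul_mem hu hv') (mul_mem hv hu'), by ring⟩

lemma quad (h2 : (2 : Ω) ≠ 0) (E : IntermediateField K Ω) {b x : Ω} (hb : b ^ 2 ∈ E)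
    (hx2 : x ^ 2 ∈ E) (hx : x ∈ E ⊔ adjoin K {b}) : x ∈ E ∨ x * b ∈ E := by
  obtain ⟨u, hu, v, hv, rfl⟩ := exists_rep E hb hx
  by_cases hbE : b ∈ E
  · left; exact add_mem hu (mul_mem hv hbE)
  have h : (2 * u * v) * b ∈ E := by
    have := sub_mem (sub_mem hx2 (pow_mem hu 2)) (mul_mem (pow_mem hv 2) hb)
    convert this using 1; ring
  have h0 : 2 * u * v = 0 := by
    by_contra h0
    apply hbE
    have h3 : 2 * u * v ∈ E := mul_mem (mul_mem (by exact_mod_cast _root_.natCast_mem E 2) hu) hv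
    have := mul_mem (inv_mem h3) h
    rwa [inv_mul_cancel_left₀ h0] at this
  rcases mul_eq_zero.1 h0 with h0 | h0
  · have hu0 : u = 0 := by simpa [h2] using h0
    right
    rw [hu0]
    convert mul_mem hv hb using 1; ring
  · left; simpa [h0] using hu

lemma finrank_step (E : IntermediateField K Ω) {b : Ω} (hb : b ^ 2 ∈ E) :
    Module.finrank K ↥(E ⊔ adjoin K {b}) = (minpoly E b).natDegree * Module.finrank K E := by
  rw [sup_eq, ← adjoin.finrank (integral_of_sq E hb), mul_comm]
  exact (Module.finrank_mul_finrank K E (adjoin E {b})).symm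

lemma minpoly_dvd (E : IntermediateField K Ω) {b : Ω} (hb : b ^ 2 ∈ E) :
    minpoly E b ∣ X ^ 2 - C ⟨b ^ 2, hb⟩ := minpoly.dvd _ _ (by simp)

lemma minpoly_le (E : IntermediateField K Ω) {b : Ω} (hb : b ^ 2 ∈ E) :
    (minpoly E b).natDegree ≤ 2 := by
  have := natDegree_le_of_dvd (minpoly_dvd E hb) (X_pow_sub_C_ne_zero (by norm_num) _)
  rwa [natDegree_X_pow_sub_C] at this

lemma minpoly_two (E : IntermediateField K Ω) {b : Ω} (hb : b ^ 2 ∈ E) (hbE : b ∉ E) :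
    (minpoly E b).natDegree = 2 := by
  refine le_antisymm (minpoly_le E hb) ?_
  rw [minpoly.two_le_natDegree_iff (integral_of_sq E hb)]
  rintro ⟨y, rfl⟩
  exact hbE y.2

lemma minpoly_eq (E : IntermediateField K Ω) {b : Ω} (hb : b ^ 2 ∈ E) (hbE : b ∉ E) :
    minpoly E b = X ^ 2 - C ⟨b ^ 2, hb⟩ := by
  refine (eq_of_monic_of_dvd_of_natDegree_le (minpoly.monic (integral_of_sq E hb))
    (monic_X_pow_sub_C _ two_ne_zero) (minpoly_dvd E hb) ?_).symm
  rw [minpoly_two E hb hbE, natDegree_X_pow_sub_C]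

lemma exists_neg [Normal K Ω] (E : IntermediateField K Ω) {b : Ω} (hb : b ^ 2 ∈ E) (hbE : b ∉ E) :
    ∃ τ : Ω ≃ₐ[K] Ω, τ (-b) = b := by
  have hb' : (-b) ^ 2 ∈ E := by simpa using hb
  have hbE' : -b ∉ E := by simpa using hbE
  have h : IsConjRoot E (-b) b := by
    unfold IsConjRoot
    rw [minpoly_eq E hb' hbE', minpoly_eq E hb hbE]
    simp
  obtain ⟨σ, hσ⟩ := isConjRoot_iff_exists_algEquiv.1 h.symm
  exact ⟨σ.restrictScalars K, hσ⟩

section kummer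
variable {ι : Type*} (b : ι → Ω)

lemma sup_empty (E : IntermediateField K Ω) :
    E ⊔ adjoin K (b '' ↑(∅ : Finset ι)) = E := by simp

lemma sup_insert (E : IntermediateField K Ω) (s : Finset ι) (j : ι) :
    E ⊔ adjoin K (b '' ↑(insert j s)) = (E ⊔ adjoin K (b '' ↑s)) ⊔ adjoin K {b j} := by
  rw [Finset.coe_insert, Set.image_insert_eq, Set.insert_eq, adjoin_union, sup_assoc,
    sup_comm (adjoin K {b j})]

lemma kummer_mem (h2 : (2 : Ω) ≠ 0) (E : IntermediateField K Ω) (s : Finset ι)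
    (hb : ∀ i ∈ s, b i ^ 2 ∈ E) {x : Ω} (hx2 : x ^ 2 ∈ E)
    (hx : x ∈ E ⊔ adjoin K (b '' ↑s)) : ∃ t ⊆ s, x * ∏ i ∈ t, b i ∈ E := by
  induction s using Finset.induction_on generalizing x with
  | empty => exact ⟨∅, le_rfl, by simpa using hx⟩
  | insert j s hj ih =>
    rw [sup_insert] at hx
    have hbj := hb j (Finset.mem_insert_self _ _)
    have hle : E ≤ E ⊔ adjoin K (b '' ↑s) := le_sup_left
    have hb' : ∀ i ∈ s, b i ^ 2 ∈ E := fun i hi => hb i (Finset.mem_insert_of_mem hi)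
    rcases quad h2 _ (hle hbj) (hle hx2) hx with h | h
    · obtain ⟨t, ht, h⟩ := ih hb' hx2 h
      exact ⟨t, ht.trans (Finset.subset_insert _ _), h⟩
    · obtain ⟨t, ht, h⟩ := ih hb' (by rw [mul_pow]; exact mul_mem hx2 hbj) h
      refine ⟨insert j t, Finset.insert_subset_insert _ ht, ?_⟩
      rw [Finset.prod_insert (fun h => hj (ht h)), ← mul_assoc]
      exact h

lemma kummer_fd (E : IntermediateField K Ω) (s : Finset ι)
    (hb : ∀ i ∈ s, b i ^ 2 ∈ E) (hE : 0 < Module.finrank K E) :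
    0 < Module.finrank K ↥(E ⊔ adjoin K (b '' ↑s)) ∧
    Module.finrank K ↥(E ⊔ adjoin K (b '' ↑s)) ≤ 2 ^ s.card * Module.finrank K E := by
  induction s using Finset.induction_on with
  | empty => rw [sup_empty]; simp [hE]
  | insert j s hj ih =>
    have hb' : ∀ i ∈ s, b i ^ 2 ∈ E := fun i hi => hb i (Finset.mem_insert_of_mem hi)
    have hle : E ≤ E ⊔ adjoin K (b '' ↑s) := le_sup_left
    have hbj := hle (hb j (Finset.mem_insert_self _ _))
    obtain ⟨h0, h1⟩ := ih hb'
    rw [sup_insert, finrank_step _ hbj, Finset.card_insert_of_notMem hj, pow_succ]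
    have := minpoly_le _ hbj
    have hp := minpoly.natDegree_pos (integral_of_sq _ hbj)
    refine ⟨by positivity, ?_⟩
    calc _ ≤ 2 * (2 ^ s.card * Module.finrank K E) := Nat.mul_le_mul this h1
      _ = _ := by ring

lemma kummer_full (h2 : (2 : Ω) ≠ 0) (E : IntermediateField K Ω) (s : Finset ι)
    (hb : ∀ i ∈ s, b i ^ 2 ∈ E) (hind : ∀ t ⊆ s, t.Nonempty → ∏ i ∈ t, b i ∉ E) :
    Module.finrank K ↥(E ⊔ adjoin K (b '' ↑s)) = 2 ^ s.card * Module.finrank K E := by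
  induction s using Finset.induction_on with
  | empty => rw [sup_empty]; simp
  | insert j s hj ih =>
    have hb' : ∀ i ∈ s, b i ^ 2 ∈ E := fun i hi => hb i (Finset.mem_insert_of_mem hi)
    have hle : E ≤ E ⊔ adjoin K (b '' ↑s) := le_sup_left
    have hbj := (hb j (Finset.mem_insert_self _ _))
    have hn : b j ∉ E ⊔ adjoin K (b '' ↑s) := by
      intro h
      obtain ⟨t, ht, h⟩ := kummer_mem b h2 E s hb' hbj h
      refine hind (insert j t) (Finset.insert_subset_insert _ ht) (by simp) ?_
      rwa [Finset.prod_insert (fun h => hj (ht h))]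
    rw [sup_insert, finrank_step _ (hle hbj), Finset.card_insert_of_notMem hj, pow_succ,
      minpoly_two _ (hle hbj) hn, ih hb' (fun t ht => hind t (ht.trans (Finset.subset_insert _ _)))]
    ring

lemma kummer_ind (E : IntermediateField K Ω) (s : Finset ι)
    (hb : ∀ i ∈ s, b i ^ 2 ∈ E)
    (hE : 0 < Module.finrank K E)
    (hfull : Module.finrank K ↥(E ⊔ adjoin K (b '' ↑s)) = 2 ^ s.card * Module.finrank K E) :
    ∀ t ⊆ s, t.Nonempty → ∏ i ∈ t, b i ∉ E := by
  have key : ∀ j ∈ s, b j ∉ E ⊔ adjoin K (b '' ↑(s.erase j)) := by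
    intro j hj h
    have h1 := (kummer_fd b E (s.erase j)
      (fun i hi => hb i (Finset.mem_of_mem_erase hi)) hE).2
    have h3 : E ⊔ adjoin K (b '' ↑s) = E ⊔ adjoin K (b '' ↑(s.erase j)) := by
      conv_lhs => rw [← Finset.insert_erase hj]
      rw [sup_insert]
      exact sup_eq_left.2 (adjoin_le_iff.2 (by simpa using h))
    rw [← h3, hfull, ← Finset.card_erase_add_one hj, pow_succ] at h1
    have : 0 < 2 ^ (s.erase j).card * Module.finrank K E := by positivity
    nlinarith
  have hne : ∀ j ∈ s, b j ≠ 0 := fun j hj h => key j hj (h ▸ zero_mem _)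
  rintro t ht ⟨j, hj⟩ hp
  apply key j (ht hj)
  rw [← Finset.mul_prod_erase t b hj] at hp
  have hq : ∏ i ∈ t.erase j, b i ≠ 0 :=
    Finset.prod_ne_zero_iff.2 fun i hi => hne i (ht (Finset.mem_of_mem_erase hi))
  have hq' : ∏ i ∈ t.erase j, b i ∈ E ⊔ adjoin K (b '' ↑(s.erase j)) := by
    refine prod_mem fun i hi => ?_
    refine (le_sup_right : _ ≤ E ⊔ adjoin K (b '' ↑(s.erase j))) (subset_adjoin _ _ ?_)
    exact ⟨i, Finset.erase_subset_erase _ ht hi, rfl⟩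
  have hle : E ≤ E ⊔ adjoin K (b '' ↑(s.erase j)) := le_sup_left
  have := mul_mem (hle hp) (inv_mem hq')
  rwa [mul_inv_cancel_right₀ hq] at this
end kummer

/-- The preimage tree levels, built from a square-root function `r`. -/
noncomputable def T (r : Ω → Ω) (x : Ω) : ℕ → Finset Ω
  | 0 => {x}
  | m + 1 => (T r x m).image r ∪ (T r x m).image (fun a => - r a)

section dyn
variable {c x₀ : K} {r : Ω → Ω}

lemma mem_T_succ (hr : ∀ a, r a ^ 2 = a - algebraMap K Ω c) (x y : Ω) (m : ℕ) :
    y ∈ T r x (m + 1) ↔ y ^ 2 + algebraMap K Ω c ∈ T r x m := by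
  simp only [T, Finset.mem_union, Finset.mem_image]
  constructor
  · rintro (⟨a, ha, rfl⟩ | ⟨a, ha, rfl⟩)
    · rw [hr]; simpa
    · rw [neg_sq, hr]; simpa
  · intro h
    have h1 : r (y ^ 2 + algebraMap K Ω c) ^ 2 = y ^ 2 := by rw [hr]; ring
    rcases sq_eq_sq_iff_eq_or_eq_neg.1 h1 with h1 | h1
    · exact Or.inl ⟨_, h, h1⟩
    · exact Or.inr ⟨_, h, by simp [h1]⟩

lemma r_mem (x : Ω) (m : ℕ) {a : Ω} (ha : a ∈ T r x m) : r a ∈ T r x (m + 1) :=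
  Finset.mem_union_left _ (Finset.mem_image_of_mem _ ha)

lemma mem_T_iff (hr : ∀ a, r a ^ 2 = a - algebraMap K Ω c) (x y : Ω) (m : ℕ) :
    y ∈ T r x m ↔ (fun z => z ^ 2 + algebraMap K Ω c)^[m] y = x := by
  induction m generalizing y with
  | zero => simp [T]
  | succ m ih => rw [mem_T_succ hr, ih, Function.iterate_succ_apply]

lemma card_T_le (x : Ω) (m : ℕ) : (T r x m).card ≤ 2 ^ m := by
  induction m with
  | zero => simp [T]
  | succ m ih =>
    have := Finset.card_union_le ((T r x m).image r) ((T r x m).image (fun a => - r a))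
    have h1 := Finset.card_image_le (s := T r x m) (f := r)
    have h2 := Finset.card_image_le (s := T r x m) (f := fun a => - r a)
    rw [T, pow_succ]; omega

/-- The field `K_m`. -/
noncomputable def KK (r : Ω → Ω) (x₀ : K) (m : ℕ) : IntermediateField K Ω :=
  adjoin K (T r (algebraMap K Ω x₀) m : Set Ω)

lemma mem_KK {m : ℕ} {a : Ω} (ha : a ∈ T r (algebraMap K Ω x₀) m) : a ∈ KK r x₀ m :=
  subset_adjoin _ _ ha

lemma KK_succ (hr : ∀ a, r a ^ 2 = a - algebraMap K Ω c) (m : ℕ) :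
    KK r x₀ (m + 1) = KK r x₀ m ⊔ adjoin K (r '' ↑(T r (algebraMap K Ω x₀) m)) := by
  apply le_antisymm
  · refine adjoin_le_iff.2 fun y hy => ?_
    have hs : ∀ a ∈ T r (algebraMap K Ω x₀) m,
        r a ∈ KK r x₀ m ⊔ adjoin K (r '' ↑(T r (algebraMap K Ω x₀) m)) := fun a ha =>
      (le_sup_right : adjoin K (r '' ↑(T r (algebraMap K Ω x₀) m)) ≤ _)
        (subset_adjoin _ _ ⟨a, ha, rfl⟩)
    rw [T, Finset.mem_coe, Finset.mem_union, Finset.mem_image, Finset.mem_image] at hy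
    rcases hy with ⟨a, ha, rfl⟩ | ⟨a, ha, rfl⟩
    · exact hs a ha
    · exact neg_mem (hs a ha)
  · refine sup_le (adjoin_le_iff.2 fun y hy => ?_) (adjoin_le_iff.2 ?_)
    · have : y = r y ^ 2 + algebraMap K Ω c := by rw [hr]; ring
      rw [this]
      exact add_mem (pow_mem (mem_KK (r_mem _ _ hy)) 2) (IntermediateField.algebraMap_mem _ _)
    · rintro _ ⟨a, ha, rfl⟩
      exact mem_KK (r_mem _ _ ha)

lemma KK_mono (hr : ∀ a, r a ^ 2 = a - algebraMap K Ω c) : Monotone (KK r x₀) :=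
  monotone_nat_of_le_succ fun m => by rw [KK_succ hr]; exact le_sup_left

lemma KK_zero : KK r x₀ 0 = (⊥ : IntermediateField K Ω) := by
  simp only [KK, T, Finset.coe_singleton]
  exact adjoin_simple_eq_bot_iff.2 (IntermediateField.algebraMap_mem _ _)

lemma sq_mem (hr : ∀ a, r a ^ 2 = a - algebraMap K Ω c) {m : ℕ} :
    ∀ a ∈ T r (algebraMap K Ω x₀) m, r a ^ 2 ∈ KK r x₀ m := fun a ha => by
  rw [hr]; exact sub_mem (mem_KK ha) (IntermediateField.algebraMap_mem _ _)

/-- Independence of the square roots at level `m`. -/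
def Ind (r : Ω → Ω) (x₀ : K) (m : ℕ) : Prop :=
  ∀ t ⊆ T r (algebraMap K Ω x₀) m, t.Nonempty → ∏ a ∈ t, r a ∉ KK r x₀ m

lemma Ind.single {m : ℕ} (h : Ind r x₀ m) {a : Ω} (ha : a ∈ T r (algebraMap K Ω x₀) m) :
    r a ∉ KK r x₀ m := by
  have := h {a} (by simpa using ha) (by simp)
  simpa using this

lemma r_inj (hr : ∀ a, r a ^ 2 = a - algebraMap K Ω c) : Function.Injective r := by
  intro a a' h
  have := hr a
  rw [h, hr a'] at this
  exact (sub_left_injective this).symm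

lemma disj (h2 : (2 : Ω) ≠ 0) (hr : ∀ a, r a ^ 2 = a - algebraMap K Ω c)
    {m : ℕ} (hi : Ind r x₀ m) :
    Disjoint ((T r (algebraMap K Ω x₀) m).image r)
      ((T r (algebraMap K Ω x₀) m).image (fun a => - r a)) := by
  rw [Finset.disjoint_left]
  intro y hy hy'
  obtain ⟨a, ha, rfl⟩ := Finset.mem_image.1 hy
  obtain ⟨a', ha', h⟩ := Finset.mem_image.1 hy'
  have : a = a' := by
    have h1 := hr a
    rw [← h, neg_sq, hr a'] at h1
    exact (sub_left_injective h1).symm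
  subst this
  have h0 : r a = 0 := by
    have : 2 * r a = 0 := by linear_combination - h
    simpa [h2] using this
  exact hi.single ha (h0 ▸ zero_mem _)

lemma card_T (h2 : (2 : Ω) ≠ 0) (hr : ∀ a, r a ^ 2 = a - algebraMap K Ω c)
    {m : ℕ} (hi : ∀ k < m, Ind r x₀ k) : (T r (algebraMap K Ω x₀) m).card = 2 ^ m := by
  induction m with
  | zero => simp [T]
  | succ m ih =>
    rw [T, Finset.card_union_of_disjoint (disj h2 hr (hi m (by omega))),
      Finset.card_image_of_injective _ (r_inj hr),
      Finset.card_image_of_injective _ (show Function.Injective (fun a => - r a) from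
        neg_injective.comp (r_inj hr)),
      ih fun k hk => hi k (by omega)]
    ring

lemma prod_T (h2 : (2 : Ω) ≠ 0) (hr : ∀ a, r a ^ 2 = a - algebraMap K Ω c)
    {m : ℕ} (hi : ∀ k < m, Ind r x₀ k) (z : Ω) :
    ∏ a ∈ T r (algebraMap K Ω x₀) m, (z - a) =
      (fun z => z ^ 2 + algebraMap K Ω c)^[m] z - algebraMap K Ω x₀ := by
  induction m generalizing z with
  | zero => simp [T]
  | succ m ih =>
    rw [T, Finset.prod_union (disj h2 hr (hi m (by omega))),
      Finset.prod_image (fun _ _ _ _ h => r_inj hr h),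
      Finset.prod_image (fun _ _ _ _ h => r_inj hr (neg_injective h)),
      ← Finset.prod_mul_distrib, Function.iterate_succ_apply, ← ih fun k hk => hi k (by omega)]
    refine Finset.prod_congr rfl fun a _ => ?_
    linear_combination - hr a

lemma finrank_pos_KK (hr : ∀ a, r a ^ 2 = a - algebraMap K Ω c) (m : ℕ) :
    0 < Module.finrank K (KK r x₀ m) := by
  induction m with
  | zero => rw [KK_zero]; simp
  | succ m ih =>
    rw [KK_succ hr]
    exact (kummer_fd r _ _ (sq_mem hr) ih).1

lemma finrank_succ_le (hr : ∀ a, r a ^ 2 = a - algebraMap K Ω c) (m : ℕ) :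
    Module.finrank K (KK r x₀ (m + 1)) ≤
      2 ^ (T r (algebraMap K Ω x₀) m).card * Module.finrank K (KK r x₀ m) := by
  rw [KK_succ hr]
  exact (kummer_fd r _ _ (sq_mem hr) (finrank_pos_KK hr m)).2

lemma pow_aux (m : ℕ) : 2 ^ (2 ^ (m + 1) - 1) = 2 ^ 2 ^ m * 2 ^ (2 ^ m - 1) := by
  rw [← pow_add]
  congr 1
  have : 0 < 2 ^ m := by positivity
  rw [pow_succ]; omega

lemma finrank_le (hr : ∀ a, r a ^ 2 = a - algebraMap K Ω c) (m : ℕ) :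
    Module.finrank K (KK r x₀ m) ≤ 2 ^ (2 ^ m - 1) := by
  induction m with
  | zero => rw [KK_zero]; simp
  | succ m ih =>
    refine (finrank_succ_le hr m).trans ?_
    rw [pow_aux]
    exact Nat.mul_le_mul (Nat.pow_le_pow_right (by norm_num) (card_T_le _ _)) ih

lemma full_iff (h2 : (2 : Ω) ≠ 0) (hr : ∀ a, r a ^ 2 = a - algebraMap K Ω c) (m : ℕ) :
    Module.finrank K (KK r x₀ m) = 2 ^ (2 ^ m - 1) ↔ ∀ k < m, Ind r x₀ k := by
  constructor
  · induction m with
    | zero => intro _ k hk; omega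
    | succ m ih =>
      intro h
      have h1 := finrank_succ_le (x₀ := x₀) hr m
      have h3 := finrank_le (x₀ := x₀) hr m
      have h4 : 2 ^ (T r (algebraMap K Ω x₀) m).card ≤ 2 ^ 2 ^ m :=
        Nat.pow_le_pow_right (by norm_num) (card_T_le _ _)
      have h5 : Module.finrank K (KK r x₀ m) = 2 ^ (2 ^ m - 1) := by
        by_contra hne
        have hlt := lt_of_le_of_ne h3 hne
        have := Nat.mul_le_mul_right (Module.finrank K (KK r x₀ m)) h4
        have := Nat.mul_lt_mul_of_pos_left hlt (show 0 < 2 ^ 2 ^ m by positivity)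
        rw [h, pow_aux] at h1
        omega
      have hk := ih h5
      have hc := card_T h2 hr hk
      intro k hkm
      rcases Nat.lt_succ_iff_lt_or_eq.1 hkm with hkm | rfl
      · exact hk k hkm
      · refine kummer_ind r _ _ (sq_mem hr) (finrank_pos_KK hr k) ?_
        rw [← KK_succ hr, h, hc, pow_aux, h5]
  · induction m with
    | zero => intro _; rw [KK_zero]; simp
    | succ m ih =>
      intro h
      have h' : ∀ k < m, Ind r x₀ k := fun k hk => h k (by omega)
      rw [KK_succ hr, kummer_full r h2 _ _ (sq_mem hr) (h m (by omega)), ih h', card_T h2 hr h',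
        pow_aux]

/-! Galois action -/

lemma map_T (hr : ∀ a, r a ^ 2 = a - algebraMap K Ω c) (σ : Ω ≃ₐ[K] Ω) {m : ℕ} {x : Ω}
    (hx : x ∈ T r (algebraMap K Ω x₀) m) : σ x ∈ T r (algebraMap K Ω x₀) m := by
  induction m generalizing x with
  | zero =>
    simp only [T, Finset.mem_singleton] at hx ⊢
    simp [hx]
  | succ m ih =>
    rw [mem_T_succ hr] at hx ⊢
    simpa using ih hx

lemma map_KK (hr : ∀ a, r a ^ 2 = a - algebraMap K Ω c) (σ : Ω ≃ₐ[K] Ω) {m : ℕ} {x : Ω}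
    (hx : x ∈ KK r x₀ m) : σ x ∈ KK r x₀ m := by
  have : KK r x₀ m ≤ (KK r x₀ m).comap (σ : Ω →ₐ[K] Ω) :=
    adjoin_le_iff.2 fun y hy => mem_KK (map_T hr σ hy)
  exact this hx

lemma pow_fix (hr : ∀ a, r a ^ 2 = a - algebraMap K Ω c) (σ : Ω ≃ₐ[K] Ω) {m : ℕ} {x : Ω}
    (hx : x ∈ T r (algebraMap K Ω x₀) m) : (σ ^ 2 ^ m) x = x := by
  induction m generalizing x with
  | zero =>
    simp only [T, Finset.mem_singleton] at hx
    simp [hx]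
  | succ m ih =>
    rw [mem_T_succ hr] at hx
    have h := ih hx
    rw [pow_succ, pow_mul, pow_two, AlgEquiv.mul_apply]
    set τ := σ ^ 2 ^ m
    have h1 : (τ x) ^ 2 = x ^ 2 := by simpa using h
    rcases sq_eq_sq_iff_eq_or_eq_neg.1 h1 with h1 | h1
    · rw [h1, h1]
    · rw [h1, map_neg, h1, neg_neg]

lemma trans_T [Normal K Ω] (hr : ∀ a, r a ^ 2 = a - algebraMap K Ω c) {m : ℕ}
    (hi : ∀ k < m, Ind r x₀ k) {x y : Ω}
    (hx : x ∈ T r (algebraMap K Ω x₀) m) (hy : y ∈ T r (algebraMap K Ω x₀) m) :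
    ∃ σ : Ω ≃ₐ[K] Ω, σ x = y := by
  induction m generalizing x y with
  | zero =>
    simp only [T, Finset.mem_singleton] at hx hy
    exact ⟨1, by simp [hx, hy]⟩
  | succ m ih =>
    rw [mem_T_succ hr] at hx hy
    obtain ⟨σ, hσ⟩ := ih (fun k hk => hi k (by omega)) hx hy
    have h1 : (σ x) ^ 2 = y ^ 2 := by simpa using hσ
    rcases sq_eq_sq_iff_eq_or_eq_neg.1 h1 with h1 | h1
    · exact ⟨σ, h1⟩
    · have hyn : y ∉ KK r x₀ m := by
        intro hyK
        apply (hi m (by omega)).single hy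
        have h3 : r (y ^ 2 + algebraMap K Ω c) ^ 2 = y ^ 2 := by rw [hr]; ring
        rcases sq_eq_sq_iff_eq_or_eq_neg.1 h3 with h3 | h3
        · rwa [h3]
        · rw [h3]; exact neg_mem hyK
      have hy2 : y ^ 2 ∈ KK r x₀ m := by
        have := sub_mem (mem_KK hy) (IntermediateField.algebraMap_mem (KK r x₀ m) c)
        simpa using this
      obtain ⟨τ, hτ⟩ := exists_neg _ hy2 hyn
      exact ⟨σ.trans τ, by simp [h1, hτ, -map_neg]⟩

/-- `∏ (a - c)` over `t` is a square in `K_m`. -/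
def Sq (r : Ω → Ω) (c x₀ : K) (m : ℕ) (t : Finset Ω) : Prop :=
  ∃ y ∈ KK r x₀ m, y ^ 2 = ∏ a ∈ t, (a - algebraMap K Ω c)

lemma prod_r_sq (hr : ∀ a, r a ^ 2 = a - algebraMap K Ω c) (t : Finset Ω) :
    (∏ a ∈ t, r a) ^ 2 = ∏ a ∈ t, (a - algebraMap K Ω c) := by
  rw [← Finset.prod_pow]
  exact Finset.prod_congr rfl fun a _ => hr a

lemma sq_iff (hr : ∀ a, r a ^ 2 = a - algebraMap K Ω c) (m : ℕ) (t : Finset Ω) :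
    Sq r c x₀ m t ↔ ∏ a ∈ t, r a ∈ KK r x₀ m := by
  constructor
  · rintro ⟨y, hy, h⟩
    rw [← prod_r_sq hr] at h
    rcases sq_eq_sq_iff_eq_or_eq_neg.1 h.symm with h | h
    · rwa [h]
    · rw [h]; exact neg_mem hy
  · intro h
    exact ⟨_, h, prod_r_sq hr t⟩

lemma sq_symmDiff {m : ℕ} {s t : Finset Ω}
    (hs : s ⊆ T r (algebraMap K Ω x₀) m)
    (hc : algebraMap K Ω c ∉ T r (algebraMap K Ω x₀) m) {d : K} (hd : d ≠ 0) {y z : Ω}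
    (hy : y ∈ KK r x₀ m) (hz : z ∈ KK r x₀ m)
    (hys : y ^ 2 = algebraMap K Ω d * ∏ a ∈ s, (a - algebraMap K Ω c))
    (hzt : z ^ 2 = algebraMap K Ω d * ∏ a ∈ t, (a - algebraMap K Ω c)) :
    Sq r c x₀ m (symmDiff s t) := by
  have h1 := Finset.prod_union_inter (s₁ := s) (s₂ := t) (f := fun a => a - algebraMap K Ω c)
  have h3 := Finset.prod_sdiff (s₁ := s ∩ t) (s₂ := s ∪ t) (f := fun a => a - algebraMap K Ω c)
    (Finset.inter_subset_left.trans Finset.subset_union_left)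
  have h4 : (s ∪ t) \ (s ∩ t) = symmDiff s t := (symmDiff_eq_sup_sdiff_inf s t).symm
  rw [h4] at h3
  have hp : ∏ a ∈ s ∩ t, (a - algebraMap K Ω c) ≠ 0 := by
    refine Finset.prod_ne_zero_iff.2 fun a ha h => hc ?_
    rw [← sub_eq_zero.1 h]
    exact hs (Finset.mem_inter.1 ha).1
  have hpm : ∏ a ∈ s ∩ t, (a - algebraMap K Ω c) ∈ KK r x₀ m :=
    prod_mem fun a ha => sub_mem (mem_KK (hs (Finset.mem_inter.1 ha).1))
      (IntermediateField.algebraMap_mem _ _)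
  have hd' : algebraMap K Ω d ≠ 0 := by simpa using hd
  refine ⟨y * z * (algebraMap K Ω d * ∏ a ∈ s ∩ t, (a - algebraMap K Ω c))⁻¹,
    mul_mem (mul_mem hy hz) (inv_mem (mul_mem (IntermediateField.algebraMap_mem _ _) hpm)), ?_⟩
  rw [mul_pow, mul_pow, hys, hzt]
  field_simp
  rw [← h1, ← h3]
  ring

lemma prod_image_σ (σ : Ω ≃ₐ[K] Ω) (t : Finset Ω) :
    ∏ a ∈ t.image σ, (a - algebraMap K Ω c) = σ (∏ a ∈ t, (a - algebraMap K Ω c)) := by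
  rw [Finset.prod_image (fun _ _ _ _ h => σ.injective h), map_prod]
  simp

lemma sq_image (hr : ∀ a, r a ^ 2 = a - algebraMap K Ω c) (σ : Ω ≃ₐ[K] Ω) {m : ℕ} {t : Finset Ω}
    (h : Sq r c x₀ m t) : Sq r c x₀ m (t.image σ) := by
  obtain ⟨y, hy, h⟩ := h
  exact ⟨σ y, map_KK hr σ hy, by rw [prod_image_σ, ← h, map_pow]⟩

lemma fixed_subset [Normal K Ω] (hr : ∀ a, r a ^ 2 = a - algebraMap K Ω c) {m : ℕ}
    (hi : ∀ k < m, Ind r x₀ k) {t : Finset Ω} (ht : t ⊆ T r (algebraMap K Ω x₀) m)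
    (hfix : ∀ σ : Ω ≃ₐ[K] Ω, t.image σ = t) : t = ∅ ∨ t = T r (algebraMap K Ω x₀) m := by
  rcases t.eq_empty_or_nonempty with h | ⟨x, hx⟩
  · exact Or.inl h
  · refine Or.inr (ht.antisymm fun y hy => ?_)
    obtain ⟨σ, rfl⟩ := trans_T hr hi (ht hx) hy
    rw [← hfix σ]
    exact Finset.mem_image_of_mem _ hx

lemma fix_of_pgroup {G W : Type*} [Group G] [MulAction G W] [Finite W] (N : ℕ)
    (hN : ∀ (g : G) (w : W), g ^ 2 ^ N • w = w) (φ : Equiv.Perm W) (hφ : φ ^ 2 = 1)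
    (hne : ∀ w, φ w ≠ w) (w₀ : W) (hw₀ : ∀ g : G, g • w₀ = w₀) :
    ∃ w, w ≠ w₀ ∧ ∀ g : G, g • w = w := by
  have : Fintype W := Fintype.ofFinite W
  have : Fact (Nat.Prime 2) := ⟨Nat.prime_two⟩
  have hcard : 2 ∣ Nat.card W := by
    by_contra h
    rw [Nat.card_eq_fintype_card] at h
    obtain ⟨a, ha⟩ := Equiv.Perm.exists_fixed_point_of_prime (n := 1) (σ := φ) h (by simpa using hφ)
    exact hne a ha
  have hH : IsPGroup 2 (MulAction.toPermHom G W).range := by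
    rintro ⟨_, g, rfl⟩
    refine ⟨N, ?_⟩
    ext w
    have := hN g w
    change ((MulAction.toPermHom G W g) ^ 2 ^ N) w = w
    rw [← map_pow]
    exact this
  obtain ⟨w, hw, hne'⟩ := hH.exists_fixed_point_of_prime_dvd_card_of_fixed_point W hcard
    (a := w₀) (by rintro ⟨_, g, rfl⟩; exact hw₀ g)
  exact ⟨w, hne'.symm, fun g => hw ⟨_, g, rfl⟩⟩

/-- The Galois action on square subsets. -/
@[reducible] noncomputable def actW (hr : ∀ a, r a ^ 2 = a - algebraMap K Ω c) (m : ℕ) :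
    MulAction (Ω ≃ₐ[K] Ω) {t : Finset Ω // t ⊆ T r (algebraMap K Ω x₀) m ∧ Sq r c x₀ m t} where
  smul σ t := ⟨t.1.image σ, Finset.image_subset_iff.2 fun _ hx => map_T hr σ (t.2.1 hx),
    sq_image hr σ t.2.2⟩
  one_smul t := Subtype.ext (by
    change t.1.image (fun x => x) = t.1
    simp)
  mul_smul σ τ t := Subtype.ext (by
    change t.1.image (fun x => σ (τ x)) = (t.1.image τ).image σ
    rw [Finset.image_image]; rfl)

lemma sq_top [Normal K Ω] (hr : ∀ a, r a ^ 2 = a - algebraMap K Ω c) {m : ℕ}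
    (hi : ∀ k < m, Ind r x₀ k) (h : ¬ Ind r x₀ m) : Sq r c x₀ m (T r (algebraMap K Ω x₀) m) := by
  by_cases hc : algebraMap K Ω c ∈ T r (algebraMap K Ω x₀) m
  · exact ⟨0, zero_mem _, by
      rw [Finset.prod_eq_zero (f := fun a => a - algebraMap K Ω c) hc (sub_self _)]; simp⟩
  unfold Ind at h
  push Not at h
  obtain ⟨s, hs, hsn, hsq⟩ := h
  rw [← sq_iff hr] at hsq
  have hsd : ∀ t : Finset Ω, t ⊆ T r (algebraMap K Ω x₀) m → Sq r c x₀ m t →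
      symmDiff t s ⊆ T r (algebraMap K Ω x₀) m ∧ Sq r c x₀ m (symmDiff t s) := by
    intro t ht htq
    constructor
    · exact (symmDiff_le_sup (a := t) (b := s)).trans (Finset.union_subset ht hs)
    · obtain ⟨y, hy, hy2⟩ := htq
      obtain ⟨z, hz, hz2⟩ := hsq
      exact sq_symmDiff ht hc (one_ne_zero (α := K)) hy hz (by simpa using hy2) (by simpa using hz2)
  let := actW (x₀ := x₀) hr m
  have hfin : Finite {t : Finset Ω // t ⊆ T r (algebraMap K Ω x₀) m ∧ Sq r c x₀ m t} := by
    refine Set.Finite.subset (Finset.finite_toSet (T r (algebraMap K Ω x₀) m).powerset) ?_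
    intro t ht
    simpa using ht.1
  let φ0 : {t : Finset Ω // t ⊆ T r (algebraMap K Ω x₀) m ∧ Sq r c x₀ m t} →
      {t : Finset Ω // t ⊆ T r (algebraMap K Ω x₀) m ∧ Sq r c x₀ m t} :=
    fun t => ⟨symmDiff t.1 s, hsd t.1 t.2.1 t.2.2⟩
  have hinv : Function.Involutive φ0 := fun t => Subtype.ext (by simp [φ0])
  obtain ⟨w, hw, hwf⟩ := fix_of_pgroup (G := Ω ≃ₐ[K] Ω)
    (W := {t : Finset Ω // t ⊆ T r (algebraMap K Ω x₀) m ∧ Sq r c x₀ m t}) m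
    (fun g w => Subtype.ext (by
      change w.1.image (g ^ 2 ^ m : Ω ≃ₐ[K] Ω) = w.1
      conv_rhs => rw [← Finset.image_id (s := w.1)]
      exact Finset.image_congr fun x hx => pow_fix hr g (w.2.1 hx)))
    hinv.toPerm (by ext1 t; exact hinv t)
    (fun t ht => by
      have h1 : symmDiff t.1 s = t.1 := congrArg Subtype.val ht
      rw [symmDiff_eq_left] at h1
      simp [h1] at hsn)
    ⟨∅, by simp, ⟨1, one_mem _, by simp⟩⟩
    (fun g => Subtype.ext (by change (∅ : Finset Ω).image g = ∅; simp))
  rcases fixed_subset hr hi w.2.1 (fun σ => congrArg Subtype.val (hwf σ)) with h | h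
  · exact absurd (Subtype.ext h) hw
  · rw [← h]; exact w.2.2

variable {D : ℕ → K}

/-- The field generated by the square roots of `D 1, …, D (i-1)`. -/
def LL (Ω : Type*) [Field Ω] [Algebra K Ω] (D : ℕ → K) (i : ℕ) : IntermediateField K Ω :=
  adjoin K {y : Ω | ∃ j : ℕ, 1 ≤ j ∧ j < i ∧ y ^ 2 = algebraMap K Ω (D j)}

lemma LL_mono : Monotone (LL Ω D) := fun _ _ h =>
  adjoin.mono _ _ _ fun _ ⟨j, h1, h2, h3⟩ => ⟨j, h1, h2.trans_le h, h3⟩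

lemma prod_D (h2 : (2 : Ω) ≠ 0) (hr : ∀ a, r a ^ 2 = a - algebraMap K Ω c)
    (hD1 : D 1 = x₀ - c)
    (hDi : ∀ i : ℕ, 2 ≤ i → D i = (fun z : K => z ^ 2 + c)^[i] 0 - x₀)
    {m : ℕ} (hi : ∀ k < m, Ind r x₀ k) :
    ∏ a ∈ T r (algebraMap K Ω x₀) m, (a - algebraMap K Ω c) = algebraMap K Ω (D (m + 1)) := by
  cases m with
  | zero => simp [T, hD1]
  | succ m =>
    have h := prod_T h2 hr hi (algebraMap K Ω c)
    have hit : ∀ k (z : K), algebraMap K Ω ((fun z : K => z ^ 2 + c)^[k] z) =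
        (fun z => z ^ 2 + algebraMap K Ω c)^[k] (algebraMap K Ω z) := by
      intro k
      induction k with
      | zero => simp
      | succ k ih => intro z; simp [ih]
    rw [hDi _ (by omega), Function.iterate_succ_apply, map_sub, hit]
    simp only [ne_eq, OfNat.ofNat_ne_zero, not_false_eq_true, zero_pow, zero_add]
    rw [← h]
    have : ∀ a ∈ T r (algebraMap K Ω x₀) (m + 1), a - algebraMap K Ω c =
      (-1) * (algebraMap K Ω c - a) := fun a _ => by ring
    rw [Finset.prod_congr rfl this, Finset.prod_mul_distrib, Finset.prod_const, card_T h2 hr hi,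
      pow_succ, mul_comm (2 ^ m), pow_mul]
    simp

lemma descend [Normal K Ω] (h2 : (2 : Ω) ≠ 0) (hr : ∀ a, r a ^ 2 = a - algebraMap K Ω c)
    (hD1 : D 1 = x₀ - c)
    (hDi : ∀ i : ℕ, 2 ≤ i → D i = (fun z : K => z ^ 2 + c)^[i] 0 - x₀)
    {m : ℕ} (hi : ∀ k < m, Ind r x₀ k) {d : K} {x : Ω} (hx : x ∈ KK r x₀ m)
    (hxd : x ^ 2 = algebraMap K Ω d) : x ∈ LL Ω D (m + 1) := by
  induction m generalizing d x with
  | zero =>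
    rw [KK_zero] at hx
    exact bot_le (a := LL Ω D (0 + 1)) hx
  | succ m ih =>
    by_cases hd : d = 0
    · have : x = 0 := by simpa [hd] using hxd
      rw [this]; exact zero_mem _
    have hi' : ∀ k < m, Ind r x₀ k := fun k hk => hi k (by omega)
    have him := hi m (by omega)
    have hc : algebraMap K Ω c ∉ T r (algebraMap K Ω x₀) m := by
      intro h
      apply him.single h
      have : r (algebraMap K Ω c) = 0 := by
        have := hr (algebraMap K Ω c)
        simpa using this
      rw [this]; exact zero_mem _
    rw [KK_succ hr] at hx
    obtain ⟨t, ht, hy⟩ := kummer_mem r h2 _ _ (sq_mem hr)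
      (by rw [hxd]; exact IntermediateField.algebraMap_mem _ _) hx
    have hy2 : (x * ∏ a ∈ t, r a) ^ 2 = algebraMap K Ω d * ∏ a ∈ t, (a - algebraMap K Ω c) := by
      rw [mul_pow, hxd, prod_r_sq hr]
    have hfix : ∀ σ : Ω ≃ₐ[K] Ω, t.image σ = t := by
      intro σ
      have hts : t.image σ ⊆ T r (algebraMap K Ω x₀) m :=
        Finset.image_subset_iff.2 fun _ hx => map_T hr σ (ht hx)
      have := sq_symmDiff hts hc hd (map_KK hr σ hy) hy
        (by rw [← map_pow, hy2, prod_image_σ]; simp) hy2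
      rw [sq_iff hr] at this
      by_contra hne
      refine him _ ?_ ?_ this
      · exact (symmDiff_le_sup (a := t.image σ) (b := t)).trans (Finset.union_subset hts ht)
      · rw [Finset.nonempty_iff_ne_empty]
        intro h
        exact hne (symmDiff_eq_bot.1 h)
    rcases fixed_subset hr hi' ht hfix with rfl | rfl
    · exact LL_mono (by omega) (ih hi' (by simpa using hy) hxd)
    · rw [prod_D h2 hr hD1 hDi hi', ← map_mul] at hy2
      have h1 : x * ∏ a ∈ T r (algebraMap K Ω x₀) m, r a ∈ LL Ω D (m + 1 + 1) :=
        LL_mono (by omega) (ih hi' hy hy2)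
      have h3 : ∏ a ∈ T r (algebraMap K Ω x₀) m, r a ∈ LL Ω D (m + 1 + 1) :=
        subset_adjoin _ _ ⟨m + 1, by omega, by omega, by
          rw [prod_r_sq hr, prod_D h2 hr hD1 hDi hi']⟩
      have h0 : ∏ a ∈ T r (algebraMap K Ω x₀) m, r a ≠ 0 :=
        Finset.prod_ne_zero_iff.2 fun a ha h => him.single ha (h ▸ zero_mem _)
      have := mul_mem h1 (inv_mem h3)
      rwa [mul_inv_cancel_right₀ h0] at this

lemma LL_le (h2 : (2 : Ω) ≠ 0) (hr : ∀ a, r a ^ 2 = a - algebraMap K Ω c)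
    (hD1 : D 1 = x₀ - c)
    (hDi : ∀ i : ℕ, 2 ≤ i → D i = (fun z : K => z ^ 2 + c)^[i] 0 - x₀)
    {m : ℕ} (hi : ∀ k < m, Ind r x₀ k) : LL Ω D (m + 1) ≤ KK r x₀ m := by
  refine adjoin_le_iff.2 ?_
  rintro y ⟨j, hj1, hjm, hy⟩
  obtain ⟨j, rfl⟩ := Nat.exists_eq_add_of_le' hj1
  rw [← prod_D h2 hr hD1 hDi (m := j) (fun k hk => hi k (by omega)), ← prod_r_sq hr] at hy
  have hm : ∏ a ∈ T r (algebraMap K Ω x₀) j, r a ∈ KK r x₀ m :=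
    prod_mem fun a ha => KK_mono hr (by omega : j + 1 ≤ m) (mem_KK (r_mem _ _ ha))
  rcases sq_eq_sq_iff_eq_or_eq_neg.1 hy with h | h
  · rw [h]; exact hm
  · rw [h]; exact neg_mem hm

lemma main_iff [Normal K Ω] (h2 : (2 : Ω) ≠ 0) (hr : ∀ a, r a ^ 2 = a - algebraMap K Ω c)
    (hD1 : D 1 = x₀ - c)
    (hDi : ∀ i : ℕ, 2 ≤ i → D i = (fun z : K => z ^ 2 + c)^[i] 0 - x₀) (n : ℕ) :
    (∀ k < n, Ind r x₀ k) ↔ ∀ i : ℕ, 1 ≤ i → i ≤ n →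
      ¬ ∃ x : Ω, x ∈ LL Ω D i ∧ x ^ 2 = algebraMap K Ω (D i) := by
  constructor
  · rintro hi i hi1 hin ⟨x, hx, hxD⟩
    obtain ⟨k, rfl⟩ := Nat.exists_eq_add_of_le' hi1
    have hi' : ∀ j < k, Ind r x₀ j := fun j hj => hi j (by omega)
    have hxK := LL_le h2 hr hD1 hDi hi' hx
    have hs : Sq r c x₀ k (T r (algebraMap K Ω x₀) k) :=
      ⟨x, hxK, by rw [hxD, prod_D h2 hr hD1 hDi hi']⟩
    rw [sq_iff hr] at hs
    refine hi k (by omega) _ le_rfl ?_ hs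
    rw [← Finset.card_pos, card_T h2 hr hi']
    positivity
  · intro h k
    induction k using Nat.strong_induction_on with
    | _ k ih =>
      intro hk
      have hi' : ∀ j < k, Ind r x₀ j := fun j hj => ih j hj (by omega)
      by_contra hn
      obtain ⟨y, hy, hy2⟩ := sq_top hr hi' hn
      rw [prod_D h2 hr hD1 hDi hi'] at hy2
      exact h (k + 1) (by omega) (by omega) ⟨y, descend h2 hr hD1 hDi hi' hy hy2, hy2⟩

lemma F_natDegree (F : ℕ → Polynomial K) (hF0 : F 0 = X)
    (hFs : ∀ m : ℕ, F (m+1) = (X ^ 2 + C c).comp (F m)) (m : ℕ) : (F m).natDegree = 2 ^ m := by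
  induction m with
  | zero => simp [hF0]
  | succ m ih => rw [hFs, natDegree_comp, natDegree_X_pow_add_C, ih, pow_succ, mul_comm]

lemma F_aeval (F : ℕ → Polynomial K) (hF0 : F 0 = X)
    (hFs : ∀ m : ℕ, F (m+1) = (X ^ 2 + C c).comp (F m)) (m : ℕ) (z : Ω) :
    aeval z (F m) = (fun z => z ^ 2 + algebraMap K Ω c)^[m] z := by
  induction m with
  | zero => simp [hF0]
  | succ m ih => rw [hFs, Function.iterate_succ_apply', aeval_comp, ih]; simp

lemma rootSet_eq (hr : ∀ a, r a ^ 2 = a - algebraMap K Ω c)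
    (F : ℕ → Polynomial K) (hF0 : F 0 = X)
    (hFs : ∀ m : ℕ, F (m+1) = (X ^ 2 + C c).comp (F m)) (m : ℕ) :
    (F m - C x₀).rootSet Ω = ↑(T r (algebraMap K Ω x₀) m) := by
  have h0 : F m - C x₀ ≠ 0 := by
    intro h
    have h1 := F_natDegree F hF0 hFs m
    rw [sub_eq_zero.1 h, natDegree_C] at h1
    have : 0 < 2 ^ m := by positivity
    omega
  ext y
  rw [mem_rootSet_of_ne h0, Finset.mem_coe, mem_T_iff hr, map_sub, F_aeval F hF0 hFs, aeval_C,
    sub_eq_zero]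

end dyn
end ArbQ

/-- Let `K` be a field of characteristic `≠ 2`, `f(z) = z² + c ∈ K[z]`,
`x₀ ∈ K`, and `n ≥ 1`. Define `D 1 := x₀ − c` and `D i := f^i(0) − x₀` for `i ≥ 2`, and
let `K_n` be the splitting field of `f^n(X) − x₀` over `K` inside a fixed algebraic
closure (the field generated by the roots of `F n − C x₀`, where `F n` is the polynomial
iterate `f^n`). Then `[K_n : K] = 2^{2^n − 1}` (i.e. the Galois group is the full
automorphism group of the binary rooted tree of height `n`) if and only if for every
`1 ≤ i ≤ n`, `D i` is not a square in the field `K(√D_1, …, √D_{i−1})`. -/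
theorem degree_iff_not_square (K : Type*) [Field K] (hchar : ringChar K ≠ 2)
    (c x₀ : K) (n : ℕ) (hn : 1 ≤ n)
    (F : ℕ → Polynomial K)
    (hF0 : F 0 = X)
    (hFs : ∀ m : ℕ, F (m+1) = (X ^ 2 + C c).comp (F m))
    (D : ℕ → K)
    (hD1 : D 1 = x₀ - c)
    (hDi : ∀ i : ℕ, 2 ≤ i → D i = (fun z : K => z ^ 2 + c)^[i] 0 - x₀) :
    Module.finrank K (IntermediateField.adjoin K
        ((F n - C x₀).rootSet (AlgebraicClosure K)) :
        IntermediateField K (AlgebraicClosure K)) = 2 ^ (2 ^ n - 1) ↔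
    ∀ i : ℕ, 1 ≤ i → i ≤ n →
      ¬ ∃ x : AlgebraicClosure K,
        x ∈ (IntermediateField.adjoin K
          {y : AlgebraicClosure K | ∃ j : ℕ, 1 ≤ j ∧ j < i ∧
            y ^ 2 = algebraMap K (AlgebraicClosure K) (D j)} :
          IntermediateField K (AlgebraicClosure K)) ∧
        x ^ 2 = algebraMap K (AlgebraicClosure K) (D i) := by
  have h2 : (2 : AlgebraicClosure K) ≠ 0 := by
    have h := Ring.two_ne_zero hchar
    have : algebraMap K (AlgebraicClosure K) 2 ≠ 0 :=
      (_root_.map_ne_zero _).2 h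
    rwa [map_ofNat] at this
  have hex : ∀ a : AlgebraicClosure K, ∃ y, y ^ 2 = a - algebraMap K (AlgebraicClosure K) c :=
    fun a => IsAlgClosed.exists_pow_nat_eq _ (by norm_num)
  choose r hr using hex
  rw [ArbQ.rootSet_eq hr F hF0 hFs n]
  exact (ArbQ.full_iff h2 hr n).trans (ArbQ.main_iff h2 hr hD1 hDi n)
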